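/- Let α ∈ (0,1), u_± = (1±α)/2, and define Ĝ_ℓ(u,φ) := e^{αℓ}[G_ℓ(u,φ) − min G] on X. If {(u_ℓ,φ_ℓ)} ⊂ X satisfies limsup_{ℓ→∞} Ĝ_ℓ(u_ℓ,φ_ℓ) < +∞, then, up to a subsequence, (u_ℓ,φ_ℓ) → (τ_z ū, τ_z φ̄) in X for some z ∈ ℝ. In particular, the family {Ĝ_ℓ} is equi-coercive on X. -/

import Mathlib

/-!
Write `A = log ((1+α)/(1-α))`, so that `φ_± = ±A`, and `q(φ) = 1 - (1-α²)/2 (1 + cosh φ)`, which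
is positive on `(-A, A)` and vanishes at `±A`. With `L = log q - log (1 - q)` and `H(p | q)` the
relative entropy of Bernoulli laws, the integrand satisfies the pointwise identity (`gg_split`)

  `g(u, φ, φ') - g(u₊, φ₊, 0) = H(u | sigmoid φ) + H(φ' | q(φ)) + φ' L(φ)`.

Changing variables `y = φ(x)` gives `∫ φ' L(φ) = ∫_{-A}^{A} L` for every admissible `φ`
(`MemC.calib`), and the standing wave has `ū = sigmoid φ̄`, `φ̄' = q(φ̄)`. This constant is therefore
`min G`, and `G_ℓ - min G = ∫ H(u | sigmoid φ) + ∫ H(φ' | q(φ))` (`MemC.excess`). Under the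
hypothesis both entropies are `O(e^{-αℓ})`; three estimates turn this into compactness.

* *The interface cannot escape* (`MemC.cost_right`). Let `φ(a) = 0`, and let `φ = A` from `ℓ` on.
  By duality `H(p | q) ≥ p μ - q (e^μ - 1)`, and `q(φ) ≤ α (A - φ)` by concavity. Choosing for `μ`
  the solution `-log (1 - e^{α(x-ℓ-1)})` of `μ' = α (e^μ - 1)` bounds the integrand below by
  `-((A - φ) μ)'`, hence the entropy by `A μ(a) ≥ A e^{-α(ℓ+1-a)}`. Compared with `O(e^{-αℓ})` this
  bounds `a` from above; the reflection `φ ↦ -φ(-·)` bounds it from below. So the zeros `a_ℓ`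
  converge along a subsequence to some `z`.
* *Stability of the wave* (`MemC.stab`). By Pinsker `φ' - q(φ)` is small in `L²`, and `q` is
  one-sided Lipschitz, so a Grönwall argument compares `φ` with `φ̄(· - a)` on compact sets.
  Monotonicity and the common limits `±A` make the comparison uniform on the line
  (`MemC.dist_wave_le`).
* *Convergence of `u`* (`exists_subseq_ae`, `tendsto_weak`). By Pinsker `u - sigmoid φ → 0` in `L²`,
  hence almost everywhere along a further subsequence, and dominated convergence gives weak*
  convergence to `sigmoid (φ̄(· - z)) = ū(· - z)`.
-/

open MeasureTheory Real Filter Topology Set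
open scoped Classical

noncomputable section

/-- Bernoulli entropy `s(p) = p log p + (1-p) log (1-p)` (with `0 log 0 = 0`). -/
def S (p : ℝ) : ℝ := p * Real.log p + (1 - p) * Real.log (1 - p)

/-- The integrand `g(u,φ,p) = s(u) + s(p) + (1-u)φ - log(1+e^φ)`. -/
def gg (u φ p : ℝ) : ℝ := S u + S p + (1 - u) * φ - Real.log (1 + Real.exp φ)

/-- The chemical potential `s'(v) = log (v/(1-v))`. -/
def phiOf (v : ℝ) : ℝ := Real.log (v / (1 - v))

/-- The step function `θ_{a₋,a₊}`. -/
def theta (am ap x : ℝ) : ℝ := if x < 0 then am else ap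

/-- Translation by `z`: `(τ_z f)(x) = f(x-z)`. -/
def tau (z : ℝ) (f : ℝ → ℝ) : ℝ → ℝ := fun x => f (x - z)

/-- Membership in `L^∞(ℝ;[0,1])`. -/
def MemU (u : ℝ → ℝ) : Prop := Measurable u ∧ ∀ x, u x ∈ Icc (0:ℝ) 1

/-- Membership in `L^∞(ℝ₊;[0,1])`. -/
def MemUplus (u : ℝ → ℝ) : Prop := Measurable u ∧ ∀ x, 0 ≤ x → u x ∈ Icc (0:ℝ) 1

/-- The class `C`: absolutely continuous with `0 ≤ φ' ≤ 1` a.e. (equivalently nondecreasing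
and 1-Lipschitz) with limits `pm` at `-∞` and `pp` at `+∞`. -/
def MemC (pm pp : ℝ) (φ : ℝ → ℝ) : Prop :=
  (∀ x y : ℝ, x ≤ y → φ x ≤ φ y ∧ φ y - φ x ≤ y - x) ∧
  Tendsto φ atBot (𝓝 pm) ∧ Tendsto φ atTop (𝓝 pp)

/-- The class `C⁺` on the half line. -/
def MemCplus (pm pp : ℝ) (φ : ℝ → ℝ) : Prop :=
  (∀ x y : ℝ, 0 ≤ x → x ≤ y → φ x ≤ φ y ∧ φ y - φ x ≤ y - x) ∧
  φ 0 = pm ∧ Tendsto φ atTop (𝓝 pp)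

/-- Membership in `X = L^∞(ℝ;[0,1]) × C`. -/
def MemX (um up : ℝ) (u φ : ℝ → ℝ) : Prop := MemU u ∧ MemC (phiOf um) (phiOf up) φ

/-- Membership in `X⁺ = L^∞(ℝ₊;[0,1]) × C⁺`. -/
def MemXplus (um up : ℝ) (u φ : ℝ → ℝ) : Prop :=
  MemUplus u ∧ MemCplus (phiOf um) (phiOf up) φ

/-- The finite volume functional `G_ℓ` on the symmetric interval `(-ℓ,ℓ)`. -/
def Gl (um up l : ℝ) (u φ : ℝ → ℝ) : EReal :=
  if (∀ x ≤ -l, u x = um ∧ φ x = phiOf um) ∧ (∀ x, l ≤ x → u x = up ∧ φ x = phiOf up) then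
    (↑(∫ x in Ioo (-l) l, (gg (u x) (φ x) (deriv φ x) - gg up (phiOf up) 0)) : EReal)
  else ⊤

/-- The finite volume functional `G_ℓ⁺` on `(0,ℓ)`. -/
def Glplus (um up l : ℝ) (u φ : ℝ → ℝ) : EReal :=
  if (∀ x, l ≤ x → u x = up ∧ φ x = phiOf up) then
    (↑(∫ x in Ioo (0:ℝ) l, (gg (u x) (φ x) (deriv φ x) - gg up (phiOf up) 0)) : EReal)
  else ⊤

/-- The infinite volume functional `G` on the whole line, `+∞` off its domain `D`. -/
def GE (um up : ℝ) (u φ : ℝ → ℝ) : EReal :=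
  if Integrable (fun x => (u x - theta um up x)^2) volume ∧
      Integrable (fun x => φ x - theta (phiOf um) (phiOf up) x) volume then
    (↑(∫ x, (gg (u x) (φ x) (deriv φ x) - gg up (phiOf up) 0)) : EReal)
  else ⊤

/-- The infinite volume functional `G⁺` on the half line, `+∞` off its domain `D⁺`. -/
def GEplus (um up : ℝ) (u φ : ℝ → ℝ) : EReal :=
  if IntegrableOn (fun x => (u x - up)^2) (Ioi 0) volume ∧
      IntegrableOn (fun x => φ x - phiOf up) (Ioi 0) volume then
    (↑(∫ x in Ioi (0:ℝ), (gg (u x) (φ x) (deriv φ x) - gg up (phiOf up) 0)) : EReal)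
  else ⊤

/-- Convergence of sequences in `X`: weak* in `L^∞(ℝ;[0,1])` and uniform for `φ`. -/
def ConvX (un φn : ℕ → ℝ → ℝ) (u φ : ℝ → ℝ) : Prop :=
  (∀ f : ℝ → ℝ, Integrable f volume →
    Tendsto (fun n => ∫ x, un n x * f x) atTop (𝓝 (∫ x, u x * f x))) ∧
  TendstoUniformly φn φ atTop

/-- Convergence of families indexed by `ℓ → ∞` in `X`. -/
def ConvXFam (U Φ : ℝ → ℝ → ℝ) (u φ : ℝ → ℝ) : Prop :=
  (∀ f : ℝ → ℝ, Integrable f volume →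
    Tendsto (fun l => ∫ x, U l x * f x) atTop (𝓝 (∫ x, u x * f x))) ∧
  TendstoUniformly Φ φ atTop

/-- Convergence of sequences in `X⁺`. -/
def ConvXplus (un φn : ℕ → ℝ → ℝ) (u φ : ℝ → ℝ) : Prop :=
  (∀ f : ℝ → ℝ, IntegrableOn f (Ioi 0) volume →
    Tendsto (fun n => ∫ x in Ioi (0:ℝ), un n x * f x) atTop
      (𝓝 (∫ x in Ioi (0:ℝ), u x * f x))) ∧
  TendstoUniformlyOn φn φ atTop (Ici 0)

/-- Convergence of families indexed by `ℓ → ∞` in `X⁺`. -/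
def ConvXplusFam (U Φ : ℝ → ℝ → ℝ) (u φ : ℝ → ℝ) : Prop :=
  (∀ f : ℝ → ℝ, IntegrableOn f (Ioi 0) volume →
    Tendsto (fun l => ∫ x in Ioi (0:ℝ), U l x * f x) atTop
      (𝓝 (∫ x in Ioi (0:ℝ), u x * f x))) ∧
  TendstoUniformlyOn Φ φ atTop (Ici 0)

/-- The standing wave `ū(x) = 1/2 + (u₊ - 1/2) tanh((u₊ - 1/2) x)`. -/
def ubarStanding (up : ℝ) (x : ℝ) : ℝ :=
  1/2 + (up - 1/2) * Real.tanh ((up - 1/2) * x)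


/-- The minimal value `min G = G(ū,φ̄)` for `u_± = (1±α)/2`. -/
def minG (α : ℝ) : ℝ :=
  ∫ x, (gg (ubarStanding ((1+α)/2) x) (phiOf (ubarStanding ((1+α)/2) x))
          (deriv (fun y => phiOf (ubarStanding ((1+α)/2) y)) x)
        - gg ((1+α)/2) (phiOf ((1+α)/2)) 0)

/-- The rescaled excess energy `Ĝ_ℓ(u,φ) = e^{αℓ} [G_ℓ(u,φ) - min G]`. -/
def hatGl (α l : ℝ) (u φ : ℝ → ℝ) : EReal :=
  (↑(Real.exp (α * l)) : EReal) *
    (Gl ((1-α)/2) ((1+α)/2) l u φ - (↑(minG α) : EReal))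

/-! ### Bernoulli relative entropy -/

/-- Relative entropy of the Bernoulli law of parameter `p` with respect to that of parameter `q`.
For `q = 0` the junk value `log 0 = 0` is harmless: only `p = 0` is used there. -/
def bent (p q : ℝ) : ℝ := S p - p * Real.log q - (1 - p) * Real.log (1 - q)

/-- A one-term relative entropy dominates the squared Hellinger distance, from
`log t ≤ t - 1` at `t = √y / √x`. -/
lemma kl_sqrt (x y : ℝ) (hx : 0 ≤ x) (hy : 0 < y) :
    (√x - √y) ^ 2 ≤ x * log x - x * log y - x + y := by
  rcases hx.eq_or_lt with rfl | hx
  · simp [Real.sq_sqrt hy.le]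
  have hsx : 0 < √x := Real.sqrt_pos.2 hx
  have hsy : 0 < √y := Real.sqrt_pos.2 hy
  have h := Real.log_le_sub_one_of_pos (div_pos hsy hsx)
  rw [Real.log_div hsy.ne' hsx.ne', Real.log_sqrt hy.le, Real.log_sqrt hx.le] at h
  have h2 : x * (√y / √x) = √x * √y := by
    nth_rewrite 1 [← Real.mul_self_sqrt hx.le]
    field_simp
  nlinarith [mul_le_mul_of_nonneg_left h hx.le, Real.sq_sqrt hx.le, Real.sq_sqrt hy.le]

lemma kl_quad (x y : ℝ) (hx : 0 ≤ x) (hx1 : x ≤ 1) (hy : 0 < y) (hy1 : y ≤ 1) :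
    (x - y) ^ 2 / 4 ≤ x * log x - x * log y - x + y := by
  refine le_trans ?_ (kl_sqrt x y hx hy)
  have h1 : √x ≤ 1 := Real.sqrt_le_one.2 hx1
  have h2 : √y ≤ 1 := Real.sqrt_le_one.2 hy1
  have h3 := Real.sqrt_nonneg x
  have h4 := Real.sqrt_nonneg y
  have h5 : x - y = (√x - √y) * (√x + √y) := by
    nlinarith [Real.sq_sqrt hx, Real.sq_sqrt hy.le]
  have h6 : (√x + √y) ^ 2 ≤ 4 := by nlinarith
  rw [h5, mul_pow]
  nlinarith [mul_le_mul_of_nonneg_left h6 (sq_nonneg (√x - √y))]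

/-- Pinsker's inequality for Bernoulli laws, with a non-optimal constant. -/
lemma bent_quad (p q : ℝ) (hp : p ∈ Icc (0:ℝ) 1) (hq : q ∈ Ioo (0:ℝ) 1) :
    (p - q) ^ 2 / 2 ≤ bent p q := by
  have h1 := kl_quad p q hp.1 hp.2 hq.1 hq.2.le
  have h2 := kl_quad (1 - p) (1 - q) (by linarith [hp.2]) (by linarith [hp.1])
    (by linarith [hq.2]) (by linarith [hq.1])
  unfold bent S
  nlinarith

/-- Duality (Donsker–Varadhan type) lower bound, after discarding the `1 - p` part of the
entropy. -/
lemma bent_dual (p q μ : ℝ) (hp : p ∈ Icc (0:ℝ) 1) (hq : q ∈ Ioo (0:ℝ) 1) :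
    p * μ - q * (exp μ - 1) ≤ bent p q := by
  have h1 := kl_sqrt p (q * exp μ) hp.1 (mul_pos hq.1 (exp_pos μ))
  rw [Real.log_mul hq.1.ne' (exp_pos μ).ne', Real.log_exp] at h1
  have h2 := kl_sqrt (1 - p) (1 - q) (by linarith [hp.2]) (by linarith [hq.2])
  unfold bent S
  nlinarith [sq_nonneg (√p - √(q * exp μ)), sq_nonneg (√(1 - p) - √(1 - q))]

lemma bent_self (p : ℝ) : bent p p = 0 := by
  unfold bent S; ring

/-! ### The speed `q` of the standing wave -/

/-- The half-height `φ₊ = log ((1 + α) / (1 - α))`. -/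
def AA (α : ℝ) : ℝ := log ((1 + α) / (1 - α))

/-- The vector field `q` whose flow generates the standing wave: `φ̄' = q(φ̄)`. -/
def qq (α φ : ℝ) : ℝ := 1 - (1 - α ^ 2) / 2 * (1 + cosh φ)

/-- The log-odds of `q`; its primitive calibrates the functional. -/
def LL (α φ : ℝ) : ℝ := log (qq α φ) - log (1 - qq α φ)

section
variable {α : ℝ} (hα : α ∈ Ioo (0:ℝ) 1)
include hα

lemma AA_pos : 0 < AA α := by
  apply Real.log_pos
  rw [lt_div_iff₀ (by linarith [hα.2])]
  linarith [hα.1]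

lemma exp_AA : exp (AA α) = (1 + α) / (1 - α) :=
  Real.exp_log (div_pos (by linarith [hα.1]) (by linarith [hα.2]))

lemma cosh_AA : cosh (AA α) = (1 + α ^ 2) / (1 - α ^ 2) := by
  have h1 : 1 - α ≠ 0 := by linarith [hα.2]
  have h2 : 1 + α ≠ 0 := by linarith [hα.1]
  have h3 : 1 - α ^ 2 ≠ 0 := by
    have : 1 - α ^ 2 = (1 - α) * (1 + α) := by ring
    rw [this]; positivity
  rw [Real.cosh_eq, Real.exp_neg, exp_AA hα]
  field_simp
  ring

lemma sinh_AA : sinh (AA α) = 2 * α / (1 - α ^ 2) := by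
  have h1 : 1 - α ≠ 0 := by linarith [hα.2]
  have h2 : 1 + α ≠ 0 := by linarith [hα.1]
  have h3 : 1 - α ^ 2 ≠ 0 := by
    have : 1 - α ^ 2 = (1 - α) * (1 + α) := by ring
    rw [this]; positivity
  rw [Real.sinh_eq, Real.exp_neg, exp_AA hα]
  field_simp
  ring

lemma kap_pos : 0 < 1 - α ^ 2 := by nlinarith [hα.1, hα.2]

lemma qq_lt_one (φ : ℝ) : qq α φ < 1 := by
  unfold qq
  have := mul_pos (kap_pos hα) (add_pos one_pos (Real.cosh_pos φ))
  linarith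

lemma qq_AA : qq α (AA α) = 0 := by
  have h := (kap_pos hα).ne'
  unfold qq
  rw [cosh_AA hα]
  field_simp
  ring

omit hα in
lemma qq_neg (φ : ℝ) : qq α (-φ) = qq α φ := by simp [qq]

lemma qq_pos {φ : ℝ} (h : |φ| < AA α) : 0 < qq α φ := by
  rw [← qq_AA hα]
  unfold qq
  have : cosh φ < cosh (AA α) := by
    rw [Real.cosh_lt_cosh, abs_of_pos (AA_pos hα)]; exact h
  nlinarith [kap_pos hα]

lemma qq_nonneg {φ : ℝ} (h : |φ| ≤ AA α) : 0 ≤ qq α φ := by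
  rw [← qq_AA hα]
  unfold qq
  have : cosh φ ≤ cosh (AA α) := by
    rw [Real.cosh_le_cosh, abs_of_pos (AA_pos hα)]; exact h
  nlinarith [kap_pos hα]

omit hα in
lemma cosh_tangent (x y : ℝ) : cosh x + sinh x * (y - x) ≤ cosh y := by
  have h1 := Real.add_one_le_exp (y - x)
  have h2 := Real.add_one_le_exp (-(y - x))
  have h3 : exp y = exp x * exp (y - x) := by rw [← Real.exp_add]; ring_nf
  have h4 : exp (-y) = exp (-x) * exp (-(y - x)) := by rw [← Real.exp_add]; ring_nf
  rw [Real.cosh_eq, Real.cosh_eq, Real.sinh_eq, h3, h4]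
  nlinarith [mul_le_mul_of_nonneg_left h1 (exp_pos x).le,
    mul_le_mul_of_nonneg_left h2 (exp_pos (-x)).le]

/-- `q` is concave with slope `-α` at the equilibrium `φ₊`. -/
lemma qq_le_tangent (φ : ℝ) : qq α φ ≤ α * (AA α - φ) := by
  have h := cosh_tangent (AA α) φ
  have h0 := qq_AA hα
  have hk := kap_pos hα
  have h1 : (1 - α ^ 2) / 2 * sinh (AA α) = α := by
    rw [sinh_AA hα]; field_simp
  unfold qq at *
  have h2 := mul_le_mul_of_nonneg_left h (half_pos hk).le
  have h3 : (1 - α ^ 2) / 2 * (cosh (AA α) + sinh (AA α) * (φ - AA α)) =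
    (1 - α ^ 2) / 2 * cosh (AA α) + α * (φ - AA α) := by
    linear_combination (φ - AA α) * h1
  rw [h3] at h2
  linarith

/-- One-sided Lipschitz bound for `q` on `[φ₋, φ₊]`, where `|q'| ≤ |q'(φ₊)| = α ≤ 1`. -/
lemma qq_osl {x y : ℝ} (hx : |x| ≤ AA α) (hy : |y| ≤ AA α) :
    (x - y) * (qq α x - qq α y) ≤ (x - y) ^ 2 := by
  have hk := kap_pos hα
  have h1 : (1 - α ^ 2) / 2 * sinh (AA α) = α := by
    rw [sinh_AA hα]; field_simp
  have bd : ∀ z : ℝ, |z| ≤ AA α → |(1 - α ^ 2) / 2 * sinh z| ≤ 1 := by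
    intro z hz
    rw [abs_le] at hz ⊢
    have a1 := Real.sinh_le_sinh.2 hz.1
    have a2 := Real.sinh_le_sinh.2 hz.2
    rw [Real.sinh_neg] at a1
    constructor <;> nlinarith [hα.1, hα.2]
  have bx := abs_le.1 (bd x hx)
  have byy := abs_le.1 (bd y hy)
  have t1 := mul_le_mul_of_nonneg_left (cosh_tangent x y) (half_pos hk).le
  have t2 := mul_le_mul_of_nonneg_left (cosh_tangent y x) (half_pos hk).le
  have e : qq α x - qq α y = (1 - α ^ 2) / 2 * cosh y - (1 - α ^ 2) / 2 * cosh x := by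
    unfold qq; ring
  rw [e]
  set c := (1 - α ^ 2) / 2 with hc
  have t1' : c * cosh x + (c * sinh x) * (y - x) ≤ c * cosh y := by linarith
  have t2' : c * cosh y + (c * sinh y) * (x - y) ≤ c * cosh x := by linarith
  rcases le_total x y with h | h
  · nlinarith [mul_le_mul_of_nonneg_left t1' (sub_nonneg.2 h),
      mul_nonneg (sub_nonneg.2 h) (sub_nonneg.2 h)]
  · nlinarith [mul_le_mul_of_nonneg_left t2' (sub_nonneg.2 h),
      mul_nonneg (sub_nonneg.2 h) (sub_nonneg.2 h)]

omit hα in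
lemma phiOf_plus : phiOf ((1 + α) / 2) = AA α := by
  unfold phiOf AA
  congr 1
  rw [show 1 - (1 + α) / 2 = (1 - α) / 2 by ring, div_div_div_cancel_right₀ two_ne_zero]

omit hα in
lemma phiOf_minus : phiOf ((1 - α) / 2) = - AA α := by
  unfold phiOf AA
  rw [← Real.log_inv]
  congr 1
  rw [show 1 - (1 - α) / 2 = (1 + α) / 2 by ring, div_div_div_cancel_right₀ two_ne_zero, inv_div]

/-- The algebraic identity behind the calibration: up to the exact term `p L(φ)`, the integrand
is a sum of two relative entropies. -/
lemma gg_split (u φ p : ℝ) :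
    gg u φ p - gg ((1 + α) / 2) (phiOf ((1 + α) / 2)) 0 =
      bent u (Real.sigmoid φ) + bent p (qq α φ) + p * LL α φ := by
  have h1 : (0:ℝ) < 1 - α := by linarith [hα.2]
  have h2 : (0:ℝ) < 1 + α := by linarith [hα.1]
  -- `1 - q` factors explicitly, so that its logarithm produces the `log (1 + e^φ)` terms
  have hq : 1 - qq α φ = (1 - α) * (1 + α) / 4 * ((1 + exp φ) * (1 + exp φ) * exp (-φ)) := by
    unfold qq
    rw [Real.cosh_eq]
    have : exp φ * exp (-φ) = 1 := by rw [← Real.exp_add]; simp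
    linear_combination (-(1 - α ^ 2) / 4 * (exp φ + 2)) * this
  have hE : 0 < 1 + exp φ := by positivity
  have hlq : log (1 - qq α φ) = log (1 - α) + log (1 + α) - log 4 + 2 * log (1 + exp φ) - φ := by
    rw [hq, Real.log_mul (by positivity) (by positivity), Real.log_div (by positivity) (by norm_num),
      Real.log_mul h1.ne' h2.ne', Real.log_mul (by positivity) (by positivity),
      Real.log_mul (by positivity) (by positivity), Real.log_exp]
    ring
  have hs1 : Real.sigmoid φ = exp φ / (1 + exp φ) := by
    rw [Real.sigmoid_def, Real.exp_neg]; field_simp; ring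
  have hs2 : 1 - Real.sigmoid φ = 1 / (1 + exp φ) := by
    rw [hs1]; field_simp; ring
  have hl1 : log (Real.sigmoid φ) = φ - log (1 + exp φ) := by
    rw [hs1, Real.log_div (exp_pos φ).ne' hE.ne', Real.log_exp]
  have hl2 : log (1 - Real.sigmoid φ) = - log (1 + exp φ) := by
    rw [hs2, Real.log_div one_ne_zero hE.ne', Real.log_one]; ring
  have hA : AA α = log (1 + α) - log (1 - α) := by
    unfold AA; rw [Real.log_div h2.ne' h1.ne']
  have hA2 : log (1 + exp (AA α)) = log 2 - log (1 - α) := by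
    rw [exp_AA hα, ← Real.log_div (by norm_num) h1.ne']
    congr 1
    field_simp; ring
  have h4 : log 4 = 2 * log 2 := by
    rw [show (4:ℝ) = 2 ^ 2 by norm_num, Real.log_pow]; norm_num
  have hS0 : S 0 = 0 := by simp [S]
  have hSp : S ((1 + α) / 2) = (1 + α) / 2 * (log (1 + α) - log 2) +
      (1 - α) / 2 * (log (1 - α) - log 2) := by
    unfold S
    rw [show 1 - (1 + α) / 2 = (1 - α) / 2 by ring, Real.log_div h2.ne' (by norm_num),
      Real.log_div h1.ne' (by norm_num)]
  rw [phiOf_plus]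
  unfold gg bent LL
  rw [hS0, hSp, hl1, hl2, hlq, hA2, hA, h4]
  ring

end

/-! ### Admissible profiles -/

section
variable {A : ℝ} {φ : ℝ → ℝ}

lemma MemC.monotone (h : MemC (-A) A φ) : Monotone φ := fun x y hxy => (h.1 x y hxy).1

lemma MemC.lip (h : MemC (-A) A φ) : LipschitzWith 1 φ := by
  apply LipschitzWith.of_dist_le_mul
  intro x y
  rw [Real.dist_eq, Real.dist_eq, NNReal.coe_one, one_mul]
  rcases le_total x y with hxy | hxy
  · have := h.1 x y hxy
    rw [abs_sub_comm, abs_of_nonneg (by linarith), abs_sub_comm, abs_of_nonneg (by linarith)]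
    exact this.2
  · have := h.1 y x hxy
    rw [abs_of_nonneg (by linarith), abs_of_nonneg (by linarith)]
    exact this.2

lemma MemC.le (h : MemC (-A) A φ) (x : ℝ) : φ x ≤ A := h.monotone.ge_of_tendsto h.2.2 x

lemma MemC.ge (h : MemC (-A) A φ) (x : ℝ) : -A ≤ φ x := h.monotone.le_of_tendsto h.2.1 x

lemma MemC.abs_le (h : MemC (-A) A φ) (x : ℝ) : |φ x| ≤ A :=
  _root_.abs_le.2 ⟨h.ge x, h.le x⟩

lemma MemC.deriv_mem (h : MemC (-A) A φ) (x : ℝ) : deriv φ x ∈ Icc (0:ℝ) 1 := by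
  refine ⟨h.monotone.deriv_nonneg, ?_⟩
  have := norm_deriv_le_of_lipschitz (x₀ := x) h.lip
  simpa using (Real.le_norm_self _).trans this

lemma MemC.deriv_zero_of_eq (h : MemC (-A) A φ) {x : ℝ} (hx : |φ x| = A) : deriv φ x = 0 := by
  rcases eq_or_eq_neg_of_abs_eq hx with h1 | h1
  · apply IsLocalMax.deriv_eq_zero
    exact Filter.Eventually.of_forall fun y => by rw [h1]; exact h.le y
  · apply IsLocalMin.deriv_eq_zero
    exact Filter.Eventually.of_forall fun y => by rw [h1]; exact h.ge y

lemma MemC.measurable_deriv (_ : MemC (-A) A φ) : Measurable (deriv φ) :=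
  _root_.measurable_deriv φ

lemma MemC.refl (h : MemC (-A) A φ) : MemC (-A) A (fun x => -φ (-x)) := by
  refine ⟨fun x y hxy => ?_, ?_, ?_⟩
  · have := h.1 (-y) (-x) (by linarith)
    constructor <;> linarith
  · exact (h.2.2.comp tendsto_neg_atBot_atTop).neg
  · have := (h.2.1.comp tendsto_neg_atTop_atBot).neg
    rwa [neg_neg] at this

lemma deriv_refl (φ : ℝ → ℝ) (x : ℝ) : deriv (fun x => -φ (-x)) x = deriv φ (-x) := by
  rw [deriv.fun_neg, deriv_comp_neg, neg_neg]

end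

section
variable {α : ℝ} (hα : α ∈ Ioo (0:ℝ) 1) {φ : ℝ → ℝ}
include hα

/-- Where `φ` reaches `±A` it has an extremum, so `φ' = 0` there: whenever `q(φ) = 0` the term
`φ' log q(φ)` vanishes, and the junk value of `log 0` is harmless. -/
lemma MemC.q_cases (h : MemC (-AA α) (AA α) φ) (x : ℝ) :
    qq α (φ x) ∈ Ioo (0:ℝ) 1 ∨ (qq α (φ x) = 0 ∧ deriv φ x = 0) := by
  rcases (h.abs_le x).lt_or_eq with h1 | h1
  · exact Or.inl ⟨qq_pos hα h1, qq_lt_one hα _⟩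
  · refine Or.inr ⟨?_, h.deriv_zero_of_eq h1⟩
    rcases eq_or_eq_neg_of_abs_eq h1 with h2 | h2
    · rw [h2, qq_AA hα]
    · rw [h2, qq_neg, qq_AA hα]

lemma MemC.bent_quad (h : MemC (-AA α) (AA α) φ) (x : ℝ) :
    (deriv φ x - qq α (φ x)) ^ 2 / 2 ≤ bent (deriv φ x) (qq α (φ x)) := by
  rcases h.q_cases hα x with h1 | ⟨h1, h2⟩
  · exact _root_.bent_quad _ _ (h.deriv_mem x) h1
  · rw [h1, h2]; simp [bent, S]

lemma MemC.bent_nonneg (h : MemC (-AA α) (AA α) φ) (x : ℝ) :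
    0 ≤ bent (deriv φ x) (qq α (φ x)) :=
  le_trans (by positivity) (h.bent_quad hα x)

lemma MemC.bent_dual (h : MemC (-AA α) (AA α) φ) (x μ : ℝ) :
    deriv φ x * μ - qq α (φ x) * (exp μ - 1) ≤ bent (deriv φ x) (qq α (φ x)) := by
  rcases h.q_cases hα x with h1 | ⟨h1, h2⟩
  · exact _root_.bent_dual _ _ _ (h.deriv_mem x) h1
  · rw [h1, h2]; simp [bent, S]

/-! ### Calibration -/

/-- `L` has logarithmic singularities at `±A`; logarithms of analytic functions are locally
integrable. -/
lemma LL_integrable : IntegrableOn (LL α) (Icc (-AA α) (AA α)) := by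
  have hq : AnalyticOnNhd ℝ (qq α) univ := by
    have hc : AnalyticOnNhd ℝ Real.cosh univ := Real.analyticOnNhd_cosh
    unfold qq
    exact analyticOnNhd_const.sub (analyticOnNhd_const.mul (analyticOnNhd_const.add hc))
  have h1 : IntervalIntegrable (log ∘ qq α) volume (-AA α) (AA α) :=
    MeromorphicOn.intervalIntegrable_log fun x _ => (hq x trivial).meromorphicAt
  have h2 : IntervalIntegrable (log ∘ fun φ => 1 - qq α φ) volume (-AA α) (AA α) :=
    MeromorphicOn.intervalIntegrable_log fun x _ =>
      (analyticAt_const.sub (hq x trivial)).meromorphicAt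
  have h3 := h1.sub h2
  rw [intervalIntegrable_iff_integrableOn_Icc_of_le (by linarith [AA_pos hα])] at h3
  exact h3

/-- Change of variables `y = φ(x)`: the calibration term depends only on the boundary values
of `φ`. -/
lemma MemC.calib (h : MemC (-AA α) (AA α) φ) :
    Integrable (fun x => deriv φ x * LL α (φ x)) ∧
      ∫ x, deriv φ x * LL α (φ x) = ∫ y in Icc (-AA α) (AA α), LL α y := by
  -- `φ` maps the null set of non-differentiability points to a null set, being Lipschitz
  set s : Set ℝ := {x | DifferentiableAt ℝ φ x} with hs
  have hsm : MeasurableSet s := measurableSet_of_differentiableAt ℝ φ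
  have hnull : volume sᶜ = 0 := h.lip.ae_differentiableAt_real
  have hrestr : volume.restrict s = volume := Measure.restrict_eq_self_of_ae_mem
    (h.lip.ae_differentiableAt_real)
  have hd : ∀ x ∈ s, HasDerivWithinAt φ (deriv φ x) s x := fun x hx =>
    (DifferentiableAt.hasDerivAt hx).hasDerivWithinAt
  have himg : volume (φ '' sᶜ) = 0 := by
    have := h.lip.hausdorffMeasure_image_le (zero_le_one' ℝ) sᶜ
    rw [hausdorffMeasure_real, hnull] at this
    simpa using this
  have hae : φ '' s =ᵐ[volume] Icc (-AA α) (AA α) := by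
    have h1 : φ '' s ≤ᵐ[volume] Icc (-AA α) (AA α) := by
      apply LE.le.eventuallyLE
      rintro _ ⟨x, -, rfl⟩
      exact ⟨h.ge x, h.le x⟩
    have h2 : (Ioo (-AA α) (AA α) : Set ℝ) ≤ᵐ[volume] φ '' s := by
      have h3 : Ioo (-AA α) (AA α) \ φ '' s ⊆ φ '' sᶜ := by
        rintro y ⟨hy, hys⟩
        obtain ⟨x, rfl⟩ : ∃ x, φ x = y := by
          obtain ⟨a, ha⟩ := (h.2.1.eventually_lt_const hy.1).exists
          obtain ⟨b, hb⟩ := (h.2.2.eventually_const_lt hy.2).exists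
          exact mem_range_of_exists_le_of_exists_ge h.lip.continuous ⟨a, ha.le⟩ ⟨b, hb.le⟩
        exact ⟨x, fun hx => hys ⟨x, hx, rfl⟩, rfl⟩
      rw [ae_le_set]
      exact measure_mono_null h3 himg
    exact h1.antisymm (Ioo_ae_eq_Icc.symm.le.trans h2)
  have hmono : MonotoneOn φ s := h.monotone.monotoneOn s
  have hbi := LL_integrable hα
  constructor
  · have := (integrableOn_image_iff_integrableOn_deriv_smul_of_monotoneOn hsm hd hmono (LL α)).1
      (hbi.congr_set_ae hae)
    rw [IntegrableOn, hrestr] at this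
    simpa using this
  · have := integral_image_eq_integral_deriv_smul_of_monotoneOn hsm hd hmono (LL α)
    rw [hrestr, setIntegral_congr_set hae] at this
    rw [this]
    simp

/-! ### The cost of reaching the equilibrium at the boundary -/

/-- If `φ a = 0` and `φ` reaches its limit at `ℓ`, the entropy spent on `[a, ℓ]` is at least of
order `e^{-α(ℓ-a)}`. -/
lemma MemC.cost_right (h : MemC (-AA α) (AA α) φ)
    (hbi : Integrable (fun x => bent (deriv φ x) (qq α (φ x)))) {a l : ℝ} (hal : a ≤ l)
    (ha : φ a = 0) (hl : φ l = AA α) :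
    AA α * exp (-α * (l + 1 - a)) ≤ ∫ x in a..l, bent (deriv φ x) (qq α (φ x)) := by
  -- `μ` solves `μ' = α (e^μ - 1)` with blow-up just beyond `ℓ`
  set E : ℝ → ℝ := fun x => exp (α * (x - l - 1)) with hE
  set μ : ℝ → ℝ := fun x => -log (1 - E x) with hμ
  have hE1 : ∀ x ≤ l, E x < 1 := by
    intro x hx
    rw [hE, Real.exp_lt_one_iff]
    nlinarith [hα.1]
  have hEd : ∀ x, HasDerivAt E (α * E x) x := by
    intro x
    have h1 : HasDerivAt (fun x : ℝ => α * (x - l - 1)) α x := by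
      simpa using (((hasDerivAt_id x).sub_const l).sub_const 1).const_mul α
    have := h1.exp
    rw [mul_comm] at this
    exact this
  have hμd : ∀ x ≤ l, HasDerivAt μ (α * (exp (μ x) - 1)) x := by
    intro x hx
    have h0 : 0 < 1 - E x := by linarith [hE1 x hx]
    have h1 := (((hEd x).const_sub 1).log h0.ne').neg
    have h2 : α * (exp (μ x) - 1) = -(-(α * E x) / (1 - E x)) := by
      simp only [hμ]
      rw [Real.exp_neg, Real.exp_log h0]
      field_simp
      ring
    rw [h2]
    exact h1
  have hμcont : ContDiffOn ℝ 1 μ (uIcc a l) := by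
    rw [uIcc_of_le hal]
    apply ContDiffOn.neg
    apply ContDiffOn.log
    · apply ContDiff.contDiffOn
      rw [hE]
      fun_prop
    · intro x hx
      have := hE1 x hx.2
      linarith
  have hφac : AbsolutelyContinuousOnInterval φ a l :=
    (h.lip.lipschitzOnWith (s := uIcc a l)).absolutelyContinuousOnInterval
  have hcac : AbsolutelyContinuousOnInterval (fun _ : ℝ => AA α) a l :=
    ((LipschitzWith.const (AA α)).lipschitzOnWith (s := uIcc a l)).absolutelyContinuousOnInterval
  -- the boundary terms of `(A - φ) μ` are `A μ(a)` at `a` and `0` at `ℓ`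
  have hF : AbsolutelyContinuousOnInterval (fun x => (AA α - φ x) * μ x) a l :=
    (hcac.fun_sub hφac).fun_mul hμcont.absolutelyContinuousOnInterval
  have hFTC := hF.integral_deriv_eq_sub
  rw [ha, hl] at hFTC
  have hle : ∫ x in a..l, -bent (deriv φ x) (qq α (φ x)) ≤
      ∫ x in a..l, deriv (fun x => (AA α - φ x) * μ x) x := by
    apply intervalIntegral.integral_mono_ae_restrict hal hbi.neg.intervalIntegrable
      hF.intervalIntegrable_deriv
    filter_upwards [ae_restrict_of_ae h.lip.ae_differentiableAt_real,
      ae_restrict_mem measurableSet_Icc] with x hx hxm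
    have hd := ((hx.hasDerivAt.const_sub (AA α)).fun_mul (hμd x hxm.2)).deriv
    rw [hd]
    have h1 := h.bent_dual hα x (μ x)
    have h2 := qq_le_tangent hα (φ x)
    have h3 : 0 ≤ exp (μ x) - 1 := by
      have h0 : 0 < 1 - E x := by linarith [hE1 x hxm.2]
      have h00 : 0 < E x := exp_pos _
      simp only [hμ]
      rw [Real.exp_neg, Real.exp_log h0, sub_nonneg]
      exact (one_le_inv₀ h0).2 (by linarith)
    simp only [Pi.neg_apply]
    nlinarith [mul_le_mul_of_nonneg_right h2 h3]
  have h5 : exp (-α * (l + 1 - a)) ≤ μ a := by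
    have h0 : 0 < 1 - E a := by linarith [hE1 a hal]
    have := Real.log_le_sub_one_of_pos h0
    have e : E a = exp (-α * (l + 1 - a)) := by simp only [hE]; ring_nf
    rw [← e]
    simp only [hμ]
    linarith
  rw [intervalIntegral.integral_neg, hFTC] at hle
  have := mul_le_mul_of_nonneg_left h5 (AA_pos hα).le
  linarith

end

/-! ### The standing wave -/

/-- The standing wave profile `φ̄ = s'(ū)`. -/
def wave (α x : ℝ) : ℝ := phiOf (ubarStanding ((1 + α) / 2) x)

lemma sigmoid_phiOf {v : ℝ} (hv : v ∈ Ioo (0:ℝ) 1) : Real.sigmoid (phiOf v) = v := by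
  have h1 : 0 < 1 - v := by linarith [hv.2]
  have h0 := hv.1
  unfold phiOf
  rw [Real.sigmoid_def, ← Real.log_inv, Real.exp_log (by positivity)]
  field_simp
  ring

lemma hasDerivAt_tanh' (x : ℝ) : HasDerivAt Real.tanh (1 - tanh x ^ 2) x := by
  have h := (Real.hasDerivAt_sinh x).fun_div (Real.hasDerivAt_cosh x) (Real.cosh_pos x).ne'
  have e : Real.tanh = fun x => sinh x / cosh x := funext Real.tanh_eq_sinh_div_cosh
  have e2 : 1 - tanh x ^ 2 = (cosh x * cosh x - sinh x * sinh x) / cosh x ^ 2 := by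
    have := (Real.cosh_pos x).ne'
    rw [Real.tanh_eq_sinh_div_cosh]
    field_simp
  rw [e2, e]
  exact h

lemma tanh_eq_sigmoid (x : ℝ) : tanh x = 2 * Real.sigmoid (2 * x) - 1 := by
  rw [Real.tanh_eq, Real.sigmoid_def]
  have h : exp (-(2 * x)) = exp (-x) * exp (-x) := by rw [← Real.exp_add]; ring_nf
  have h2 : exp x = (exp (-x))⁻¹ := by rw [Real.exp_neg, inv_inv]
  have h3 := exp_pos (-x)
  rw [h, h2]
  field_simp
  ring

section
variable {α : ℝ} (hα : α ∈ Ioo (0:ℝ) 1)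

lemma ubar_eq (α x : ℝ) :
    ubarStanding ((1 + α) / 2) x = 1 / 2 + α / 2 * tanh (α / 2 * x) := by
  unfold ubarStanding; rw [show (1 + α) / 2 - 1 / 2 = α / 2 by ring]

lemma wave_zero : wave α 0 = 0 := by
  unfold wave
  rw [ubar_eq]
  norm_num [phiOf]

include hα

lemma ubar_mem (x : ℝ) : ubarStanding ((1 + α) / 2) x ∈ Ioo (0:ℝ) 1 := by
  rw [ubar_eq]
  have h1 := Real.tanh_lt_one (α / 2 * x)
  have h2 := Real.neg_one_lt_tanh (α / 2 * x)
  have := hα.1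
  have := hα.2
  constructor <;> nlinarith

lemma sigmoid_wave (x : ℝ) : Real.sigmoid (wave α x) = ubarStanding ((1 + α) / 2) x :=
  sigmoid_phiOf (ubar_mem hα x)

lemma qq_wave (x : ℝ) : qq α (wave α x) =
    α ^ 2 * (1 - tanh (α / 2 * x) ^ 2) / (1 - α ^ 2 * tanh (α / 2 * x) ^ 2) := by
  have hu := ubar_mem hα x
  unfold wave phiOf qq
  have h1 : 0 < 1 - ubarStanding ((1 + α) / 2) x := by linarith [hu.2]
  rw [Real.cosh_log (div_pos hu.1 h1)]
  rw [ubar_eq] at *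
  set t := tanh (α / 2 * x)
  have h2 : 0 < 1 + α * t := by linarith [hu.1]
  have h3 : 0 < 1 - α * t := by linarith [hu.2]
  have h4 : 1 - α ^ 2 * t ^ 2 ≠ 0 := by
    have : 1 - α ^ 2 * t ^ 2 = (1 + α * t) * (1 - α * t) := by ring
    rw [this]; positivity
  rw [show (1 / 2 + α / 2 * t) / (1 - (1 / 2 + α / 2 * t)) = (1 + α * t) / (1 - α * t) by
    rw [show 1 / 2 + α / 2 * t = (1 + α * t) / 2 by ring,
      show 1 - (1 + α * t) / 2 = (1 - α * t) / 2 by ring, div_div_div_cancel_right₀ two_ne_zero]]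
  rw [inv_div]
  field_simp
  ring

lemma wave_hasDerivAt (x : ℝ) : HasDerivAt (wave α) (qq α (wave α x)) x := by
  have hu := ubar_mem hα x
  have h1 : 0 < 1 - ubarStanding ((1 + α) / 2) x := by linarith [hu.2]
  have hlin : HasDerivAt (fun x : ℝ => α / 2 * x) (α / 2) x := by
    simpa using (hasDerivAt_id x).const_mul (α / 2)
  have hd : HasDerivAt (ubarStanding ((1 + α) / 2))
      (α / 2 * ((1 - tanh (α / 2 * x) ^ 2) * (α / 2))) x := by
    rw [show ubarStanding ((1 + α) / 2) = fun x => 1 / 2 + α / 2 * tanh (α / 2 * x) from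
      funext (ubar_eq α)]
    exact (((hasDerivAt_tanh' _).comp x hlin).const_mul (α / 2)).const_add (1 / 2)
  have h2 := (hd.fun_div (hd.const_sub 1) h1.ne').log (div_pos hu.1 h1).ne'
  rw [qq_wave hα]
  refine h2.congr_deriv ?_
  rw [ubar_eq] at *
  set t := tanh (α / 2 * x)
  have h2 : 0 < 1 + α * t := by linarith [hu.1]
  have h3 : 0 < 1 - α * t := by linarith [hu.2]
  have e1 : 1 / 2 + α / 2 * t = (1 + α * t) / 2 := by ring
  have e2 : 1 - (1 + α * t) / 2 = (1 - α * t) / 2 := by ring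
  have e3 : 1 - α ^ 2 * t ^ 2 = (1 + α * t) * (1 - α * t) := by ring
  rw [e1, e2, e3]
  field_simp
  ring

lemma wave_tendsto_top : Tendsto (wave α) atTop (𝓝 (AA α)) := by
  rw [← phiOf_plus]
  have h1 : Tendsto (ubarStanding ((1 + α) / 2)) atTop (𝓝 ((1 + α) / 2)) := by
    rw [show ubarStanding ((1 + α) / 2) = fun x => 1 / 2 + α / 2 * (2 * Real.sigmoid (α * x) - 1) by
      funext x; rw [ubar_eq, tanh_eq_sigmoid]; ring_nf]
    have := Real.tendsto_sigmoid_atTop.comp (tendsto_id.const_mul_atTop hα.1)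
    have h2 := (((this.const_mul 2).sub_const 1).const_mul (α / 2)).const_add (1 / 2)
    rw [show (1 + α) / 2 = 1 / 2 + α / 2 * (2 * 1 - 1) by ring]
    exact h2
  have hc : ContinuousAt phiOf ((1 + α) / 2) := by
    have h1 := hα.1
    have h2 := hα.2
    unfold phiOf
    apply ContinuousAt.log
    · exact continuousAt_id.div (by fun_prop) (ne_of_gt (by linarith))
    · have : 0 < 1 - (1 + α) / 2 := by linarith
      positivity
  exact hc.tendsto.comp h1

omit hα in
lemma wave_neg (x : ℝ) : wave α (-x) = - wave α x := by
  unfold wave phiOf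
  rw [← Real.log_inv, ubar_eq, ubar_eq, inv_div, mul_neg, Real.tanh_neg]
  ring_nf

lemma wave_memC : MemC (-AA α) (AA α) (wave α) := by
  have hd := wave_hasDerivAt hα
  have hdiff : Differentiable ℝ (wave α) := fun x => (hd x).differentiableAt
  have hm : Monotone (wave α) := by
    apply monotone_of_deriv_nonneg hdiff
    intro x
    rw [(hd x).deriv, qq_wave hα]
    have h1 := Real.tanh_lt_one (α / 2 * x)
    have h2 := Real.neg_one_lt_tanh (α / 2 * x)
    have h3 : tanh (α / 2 * x) ^ 2 < 1 := by nlinarith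
    have h4 : 0 < 1 - α ^ 2 := kap_pos hα
    apply div_nonneg <;> nlinarith [sq_nonneg α]
  have hm2 : Monotone (fun x => x - wave α x) := by
    apply monotone_of_deriv_nonneg (differentiable_id.fun_sub hdiff)
    intro x
    rw [show deriv (fun x => id x - wave α x) x = _ from
      ((hasDerivAt_id' x).fun_sub (hd x)).deriv]
    linarith [qq_lt_one hα (wave α x)]
  refine ⟨fun x y hxy => ⟨hm hxy, ?_⟩, ?_, wave_tendsto_top hα⟩
  · have := hm2 hxy
    simp only at this
    linarith
  · have := ((wave_tendsto_top hα).comp tendsto_neg_atBot_atTop).neg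
    refine this.congr fun x => ?_
    simp [wave_neg]

/-- The standing wave has zero relative entropy, so only the calibration term is left. -/
lemma minG_eq : minG α = ∫ y in Icc (-AA α) (AA α), LL α y := by
  rw [← ((wave_memC hα).calib hα).2]
  unfold minG
  refine integral_congr_ae (Eventually.of_forall fun x => ?_)
  have hw : ∀ x, phiOf (ubarStanding ((1 + α) / 2) x) = wave α x := fun _ => rfl
  simp only
  rw [gg_split hα]
  simp only [hw]
  rw [sigmoid_wave hα, bent_self, (show deriv (fun y => wave α y) x = deriv (wave α) x from rfl),
    (wave_hasDerivAt hα x).deriv, bent_self]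
  ring

/-! ### The excess energy as a relative entropy -/

variable {φ u : ℝ → ℝ}

omit hα in
lemma gg_continuous : Continuous (fun z : ℝ × ℝ × ℝ => gg z.1 z.2.1 z.2.2) := by
  have hS : Continuous S := by
    unfold S
    exact Real.continuous_mul_log.add (Real.continuous_mul_log.comp (continuous_const.sub continuous_id))
  unfold gg
  have h1 : Continuous fun z : ℝ × ℝ × ℝ => S z.1 := hS.comp continuous_fst
  have h2 : Continuous fun z : ℝ × ℝ × ℝ => S z.2.2 := hS.comp (by fun_prop)
  have h3 : Continuous fun z : ℝ × ℝ × ℝ => Real.log (1 + Real.exp z.2.1) :=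
    Continuous.log (by fun_prop) fun z => by positivity
  exact ((h1.add h2).add (by fun_prop)).sub h3

/-- The excess energy `G_ℓ - min G` is a sum of two relative entropies over the whole line: the
integrand vanishes outside `(-ℓ, ℓ)`. -/
lemma MemC.excess (h : MemC (-AA α) (AA α) φ) (hu : MemU u) {l : ℝ}
    (hm : ∀ x ≤ -l, u x = (1 - α) / 2 ∧ φ x = phiOf ((1 - α) / 2))
    (hp : ∀ x, l ≤ x → u x = (1 + α) / 2 ∧ φ x = phiOf ((1 + α) / 2)) :
    Integrable (fun x => bent (u x) (Real.sigmoid (φ x))) ∧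
    Integrable (fun x => bent (deriv φ x) (qq α (φ x))) ∧
    ∫ x in Ioo (-l) l, (gg (u x) (φ x) (deriv φ x) - gg ((1 + α) / 2) (phiOf ((1 + α) / 2)) 0) =
      (∫ x, bent (u x) (Real.sigmoid (φ x))) + (∫ x, bent (deriv φ x) (qq α (φ x))) + minG α := by
  set G : ℝ → ℝ := fun x =>
    gg (u x) (φ x) (deriv φ x) - gg ((1 + α) / 2) (phiOf ((1 + α) / 2)) 0 with hG
  have hα1 := hα.1
  have hα2 := hα.2
  have hGs : ∀ x, G x = bent (u x) (Real.sigmoid (φ x)) + bent (deriv φ x) (qq α (φ x)) +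
      deriv φ x * LL α (φ x) := fun x => gg_split hα _ _ _
  have hG0 : ∀ x, x ∉ Ioo (-l) l → G x = 0 := by
    intro x hx
    have key : ∀ v ∈ Ioo (0:ℝ) 1, u x = v → φ x = phiOf v → |phiOf v| = AA α → G x = 0 := by
      intro v hv h1 h2 h3
      have hd := h.deriv_zero_of_eq (x := x) (by rw [h2, h3])
      have hq : qq α (φ x) = 0 := by
        rw [← h2] at h3
        rcases eq_or_eq_neg_of_abs_eq h3 with h4 | h4
        · rw [h4, qq_AA hα]
        · rw [h4, qq_neg, qq_AA hα]
      rw [hGs, hq, hd, h2, sigmoid_phiOf hv, h1, bent_self, bent_self]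
      ring
    rw [mem_Ioo, not_and_or, not_lt, not_lt] at hx
    rcases hx with hx | hx
    · obtain ⟨h1, h2⟩ := hm x hx
      refine key _ ⟨by linarith, by linarith⟩ h1 h2 ?_
      rw [phiOf_minus, abs_neg, abs_of_pos (AA_pos hα)]
    · obtain ⟨h1, h2⟩ := hp x hx
      refine key _ ⟨by linarith, by linarith⟩ h1 h2 ?_
      rw [phiOf_plus, abs_of_pos (AA_pos hα)]
  have hGi : Integrable G := by
    have hGm : Measurable G := by
      apply Measurable.sub_const
      exact gg_continuous.measurable.comp
        (hu.1.prodMk (h.lip.continuous.measurable.prodMk h.measurable_deriv))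
    obtain ⟨C, hC⟩ := (isCompact_Icc.prod (isCompact_Icc.prod isCompact_Icc) :
      IsCompact (Icc (0:ℝ) 1 ×ˢ (Icc (-AA α) (AA α) ×ˢ Icc (0:ℝ) 1))).exists_bound_of_continuousOn
        ((gg_continuous.sub (continuous_const (y :=
          gg ((1 + α) / 2) (phiOf ((1 + α) / 2)) 0))).continuousOn)
    have hon : IntegrableOn G (Ioo (-l) l) := by
      apply Measure.integrableOn_of_bounded (M := C) (by simp) hGm.aestronglyMeasurable
      refine Eventually.of_forall fun x => ?_
      exact hC (u x, φ x, deriv φ x) ⟨hu.2 x, ⟨h.ge x, h.le x⟩, h.deriv_mem x⟩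
    rwa [integrableOn_iff_integrable_of_support_subset] at hon
    intro x hx
    by_contra hn
    exact hx (hG0 x hn)
  obtain ⟨hLi, hLe⟩ := h.calib hα
  have hsum : Integrable (fun x => bent (u x) (Real.sigmoid (φ x)) +
      bent (deriv φ x) (qq α (φ x))) := by
    refine (hGi.sub hLi).congr (Eventually.of_forall fun x => ?_)
    simp only [Pi.sub_apply, hGs]
    ring
  have hnn1 : ∀ x, 0 ≤ bent (u x) (Real.sigmoid (φ x)) := fun x =>
    le_trans (by positivity) (_root_.bent_quad _ _ (hu.2 x) ⟨Real.sigmoid_pos _, Real.sigmoid_lt_one _⟩)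
  have hnn2 := h.bent_nonneg hα
  have hbm : Measurable (fun z : ℝ × ℝ => bent z.1 z.2) := by
    unfold bent S
    fun_prop
  have hqm : Measurable (qq α) := by
    unfold qq
    fun_prop
  have hφm := h.lip.continuous.measurable
  have hi1 : Integrable (fun x => bent (u x) (Real.sigmoid (φ x))) := by
    refine hsum.mono' (hbm.comp (hu.1.prodMk
      (_root_.continuous_sigmoid.measurable.comp hφm))).aestronglyMeasurable
      (Eventually.of_forall fun x => ?_)
    rw [Real.norm_of_nonneg (hnn1 x)]
    linarith [hnn2 x]
  have hi2 : Integrable (fun x => bent (deriv φ x) (qq α (φ x))) := by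
    refine hsum.mono' (hbm.comp (h.measurable_deriv.prodMk
      (hqm.comp hφm))).aestronglyMeasurable (Eventually.of_forall fun x => ?_)
    rw [Real.norm_of_nonneg (hnn2 x)]
    linarith [hnn1 x]
  refine ⟨hi1, hi2, ?_⟩
  rw [setIntegral_eq_integral_of_forall_compl_eq_zero hG0, minG_eq hα, ← hLe,
    ← integral_add hi1 hi2, ← integral_add hsum hLi]
  exact integral_congr_ae (Eventually.of_forall hGs)

/-! ### Stability of the standing wave -/

lemma MemC.defect_integrable (h : MemC (-AA α) (AA α) φ)
    (hbi : Integrable (fun x => bent (deriv φ x) (qq α (φ x)))) :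
    Integrable (fun x => (deriv φ x - qq α (φ x)) ^ 2) := by
  have hqm : Measurable (qq α) := by
    unfold qq
    fun_prop
  refine (hbi.const_mul 2).mono' ((h.measurable_deriv.sub
    (hqm.comp h.lip.continuous.measurable)).pow_const 2).aestronglyMeasurable
    (Eventually.of_forall fun x => ?_)
  rw [Real.norm_of_nonneg (sq_nonneg _)]
  linarith [h.bent_quad hα x]

/-- Grönwall estimate to the right of a zero of `φ`. -/
lemma MemC.stab_right (h : MemC (-AA α) (AA α) φ)
    (hbi : Integrable (fun x => bent (deriv φ x) (qq α (φ x)))) {a x : ℝ} (hax : a ≤ x)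
    (ha : φ a = 0) :
    (φ x - wave α (x - a)) ^ 2 ≤
      exp (3 * (x - a)) * (2 * ∫ y, bent (deriv φ y) (qq α (φ y))) := by
  have hw := wave_memC hα
  have hdi := h.defect_integrable hα hbi
  set D : ℝ → ℝ := fun y => φ y - wave α (y - a) with hD
  have hDl : LipschitzWith (1 + 1 * 1) D := by
    apply h.lip.sub
    exact hw.lip.comp (LipschitzWith.of_dist_le_mul fun x y => by simp)
  have hDac : AbsolutelyContinuousOnInterval D a x :=
    (hDl.lipschitzOnWith (s := uIcc a x)).absolutelyContinuousOnInterval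
  have hEac : AbsolutelyContinuousOnInterval (fun y => exp (-3 * (y - a))) a x := by
    apply ContDiffOn.absolutelyContinuousOnInterval
    apply ContDiff.contDiffOn
    fun_prop
  -- with `D² e^{-3(y-a)}`: one unit of the rate absorbs `2 D (φ' - q(φ))` by Young, two units
  -- absorb the one-sided Lipschitz bound on `q`
  have hF : AbsolutelyContinuousOnInterval (fun y => (D y * D y) * exp (-3 * (y - a))) a x :=
    (hDac.fun_mul hDac).fun_mul hEac
  have hFTC := hF.integral_deriv_eq_sub
  have hDa : D a = 0 := by simp [hD, ha, wave_zero]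
  rw [hDa] at hFTC
  have hle : ∫ y in a..x, deriv (fun y => (D y * D y) * exp (-3 * (y - a))) y ≤
      ∫ y in a..x, (deriv φ y - qq α (φ y)) ^ 2 := by
    apply intervalIntegral.integral_mono_ae_restrict hax hF.intervalIntegrable_deriv
      hdi.intervalIntegrable
    filter_upwards [ae_restrict_of_ae h.lip.ae_differentiableAt_real,
      ae_restrict_mem measurableSet_Icc] with y hy hym
    have hd1 : HasDerivAt D (deriv φ y - qq α (wave α (y - a))) y := by
      have := (wave_hasDerivAt hα (y - a)).comp_sub_const y a
      exact hy.hasDerivAt.fun_sub this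
    have hd2 : HasDerivAt (fun y => exp (-3 * (y - a))) (exp (-3 * (y - a)) * (-3)) y := by
      have : HasDerivAt (fun y => -3 * (y - a)) (-3) y := by
        simpa using ((hasDerivAt_id y).sub_const a).const_mul (-3)
      exact this.exp
    rw [((hd1.fun_mul hd1).fun_mul hd2).deriv]
    have hq := qq_osl hα (h.abs_le y) (hw.abs_le (y - a))
    have hDy : D y = φ y - wave α (y - a) := rfl
    rw [← hDy] at hq
    have he0 := exp_pos (-3 * (y - a))
    have he1 : exp (-3 * (y - a)) ≤ 1 := by
      rw [Real.exp_le_one_iff]; linarith [hym.1]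
    set e := exp (-3 * (y - a))
    set p := deriv φ y
    set q1 := qq α (φ y)
    set q2 := qq α (wave α (y - a))
    have h1 : 2 * D y * (p - q2) - 3 * (D y * D y) ≤ (p - q1) ^ 2 := by
      nlinarith [sq_nonneg (D y - (p - q1))]
    have h2 := mul_le_mul_of_nonneg_right h1 he0.le
    have h3 := mul_le_mul_of_nonneg_left he1 (sq_nonneg (p - q1))
    linarith
  have hle2 : ∫ y in a..x, (deriv φ y - qq α (φ y)) ^ 2 ≤
      2 * ∫ y, bent (deriv φ y) (qq α (φ y)) := by
    rw [intervalIntegral.integral_of_le hax, ← integral_const_mul]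
    refine (setIntegral_le_integral hdi (Eventually.of_forall fun y => sq_nonneg _)).trans ?_
    refine integral_mono hdi (hbi.const_mul 2) fun y => ?_
    linarith [h.bent_quad hα y]
  have hfin : D x * D x * exp (-3 * (x - a)) ≤ 2 * ∫ y, bent (deriv φ y) (qq α (φ y)) := by
    linarith
  have := mul_le_mul_of_nonneg_left hfin (exp_pos (3 * (x - a))).le
  have e1 : exp (3 * (x - a)) * exp (-3 * (x - a)) = 1 := by
    rw [← Real.exp_add]; ring_nf; simp
  calc (φ x - wave α (x - a)) ^ 2 = exp (3 * (x - a)) * (D x * D x * exp (-3 * (x - a))) := by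
        simp only [hD]
        linear_combination (-(φ x - wave α (x - a)) ^ 2) * e1
    _ ≤ _ := this

end

/-! ### Two-sided estimates around the zero of the profile -/

section
variable {α : ℝ} {φ : ℝ → ℝ}

lemma bent_refl (x : ℝ) : bent (deriv (fun x => -φ (-x)) x) (qq α (-φ (-x))) =
    (fun y => bent (deriv φ y) (qq α (φ y))) (-x) := by
  rw [deriv_refl, qq_neg]

lemma integrable_bent_refl (hbi : Integrable (fun x => bent (deriv φ x) (qq α (φ x)))) :
    Integrable (fun x => bent (deriv (fun x => -φ (-x)) x) (qq α (-φ (-x)))) := by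
  simp only [bent_refl]
  exact hbi.comp_neg

lemma integral_bent_refl : ∫ x, bent (deriv (fun x => -φ (-x)) x) (qq α (-φ (-x))) =
    ∫ x, bent (deriv φ x) (qq α (φ x)) := by
  simp only [bent_refl]
  exact integral_neg_eq_self (fun y => bent (deriv φ y) (qq α (φ y))) volume

variable (hα : α ∈ Ioo (0:ℝ) 1)
include hα

/-- Two-sided stability, by reflection for `t ≤ 0`. -/
lemma MemC.stab (h : MemC (-AA α) (AA α) φ)
    (hbi : Integrable (fun x => bent (deriv φ x) (qq α (φ x)))) {a : ℝ} (ha : φ a = 0) (t : ℝ) :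
    (φ (a + t) - wave α t) ^ 2 ≤
      exp (3 * |t|) * (2 * ∫ y, bent (deriv φ y) (qq α (φ y))) := by
  rcases le_total 0 t with ht | ht
  · have := h.stab_right hα hbi (a := a) (x := a + t) (by linarith) ha
    rw [abs_of_nonneg ht]
    simpa using this
  · have := h.refl.stab_right hα (integrable_bent_refl hbi) (a := -a) (x := -a - t)
      (by linarith) (by simp [ha])
    rw [integral_bent_refl, show -(-a - t) = a + t by ring, show -a - t - -a = -t by ring,
      wave_neg] at this
    rw [abs_of_nonpos ht]
    linarith

/-- An upper bound on the zero of `φ`, uniform in `ℓ`: the factors `e^{-αℓ}` in the entropy bound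
and in the lower bound of `MemC.cost_right` cancel. -/
lemma MemC.zero_le (h : MemC (-AA α) (AA α) φ)
    (hbi : Integrable (fun x => bent (deriv φ x) (qq α (φ x)))) {a l M : ℝ} (ha : φ a = 0)
    (hl : ∀ x, l ≤ x → φ x = AA α)
    (hM : ∫ x, bent (deriv φ x) (qq α (φ x)) ≤ M * exp (-α * l)) :
    a ≤ 1 + M / (AA α * α) := by
  have hA := AA_pos hα
  have hal : a ≤ l := by
    by_contra! hn
    linarith [hl a hn.le]
  have h1 := h.cost_right hα hbi hal ha (hl l le_rfl)
  have h2 : ∫ x in a..l, bent (deriv φ x) (qq α (φ x)) ≤ ∫ x, bent (deriv φ x) (qq α (φ x)) := by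
    rw [intervalIntegral.integral_of_le hal]
    exact setIntegral_le_integral hbi (Eventually.of_forall (h.bent_nonneg hα))
  have h3 : exp (-α * (l + 1 - a)) = exp (α * (a - 1)) * exp (-α * l) := by
    rw [← Real.exp_add]; ring_nf
  rw [h3, ← mul_assoc] at h1
  have h4 := le_of_mul_le_mul_right (h1.trans (h2.trans hM)) (exp_pos _)
  have h5 := Real.add_one_le_exp (α * (a - 1))
  have h6 : AA α * (α * (a - 1)) ≤ M := by
    refine le_trans ?_ h4
    gcongr
    linarith
  have : a - 1 ≤ M / (AA α * α) := by
    rw [le_div_iff₀ (mul_pos hA hα.1)]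
    linarith
  linarith

lemma MemC.abs_zero_le (h : MemC (-AA α) (AA α) φ)
    (hbi : Integrable (fun x => bent (deriv φ x) (qq α (φ x)))) {a l M : ℝ} (ha : φ a = 0)
    (hl : ∀ x, l ≤ x → φ x = AA α) (hl' : ∀ x, x ≤ -l → φ x = -AA α)
    (hM : ∫ x, bent (deriv φ x) (qq α (φ x)) ≤ M * exp (-α * l)) :
    |a| ≤ 1 + M / (AA α * α) := by
  rw [abs_le']
  refine ⟨h.zero_le hα hbi ha hl hM, ?_⟩
  refine h.refl.zero_le hα (integrable_bent_refl hbi) (l := l) (by simp [ha]) (fun x hx => ?_) ?_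
  · rw [hl' (-x) (by linarith), neg_neg]
  · rwa [integral_bent_refl]

lemma MemC.exists_zero (h : MemC (-AA α) (AA α) φ) : ∃ a, φ a = 0 := by
  have hA := AA_pos hα
  obtain ⟨x, hx⟩ := (h.2.1.eventually_lt_const (show -AA α < 0 by linarith)).exists
  obtain ⟨y, hy⟩ := (h.2.2.eventually_const_lt hA).exists
  exact mem_range_of_exists_le_of_exists_ge h.lip.continuous ⟨x, hx.le⟩ ⟨y, hy.le⟩

/-- A local estimate on `[a - R, a + R]` extends to the whole line because both profiles are
monotone and nearly saturated at distance `R`. -/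
lemma MemC.dist_wave_le (h : MemC (-AA α) (AA α) φ) {a R δ : ℝ} (hδ : 0 ≤ δ) (hR : 0 ≤ R)
    (hwR : AA α - δ ≤ wave α R) (hloc : ∀ t, |t| ≤ R → |φ (a + t) - wave α t| ≤ δ) (t : ℝ) :
    |φ (a + t) - wave α t| ≤ 2 * δ := by
  have hw := wave_memC hα
  rcases le_or_gt |t| R with ht | ht
  · linarith [hloc t ht]
  · rcases lt_abs.1 ht with ht | ht
    · have h1 := _root_.abs_le.1 (hloc R (abs_of_nonneg hR).le)
      have h2 := h.monotone (show a + R ≤ a + t by linarith)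
      have h3 := hw.monotone ht.le
      have h4 := hw.le t
      have h5 := h.le (a + t)
      rw [_root_.abs_le]
      constructor <;> linarith
    · have h1 := _root_.abs_le.1 (hloc (-R) (by rw [abs_neg, abs_of_nonneg hR]))
      rw [wave_neg] at h1
      have h2 := h.monotone (show a + t ≤ a + -R by linarith)
      have h3 := hw.monotone (show t ≤ -R by linarith)
      rw [wave_neg] at h3
      have h4 := hw.ge t
      have h5 := h.ge (a + t)
      rw [_root_.abs_le]
      constructor <;> linarith

end

/-! ### Convergence -/

section
variable {α : ℝ} (hα : α ∈ Ioo (0:ℝ) 1) {φ u : ℕ → ℝ → ℝ} {a : ℕ → ℝ} {z : ℝ}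
include hα

lemma tendstoUniformly_wave (h : ∀ n, MemC (-AA α) (AA α) (φ n))
    (hbi : ∀ n, Integrable (fun x => bent (deriv (φ n) x) (qq α (φ n x))))
    (ha : ∀ n, φ n (a n) = 0) (haz : Tendsto a atTop (𝓝 z))
    (hE : Tendsto (fun n => ∫ x, bent (deriv (φ n) x) (qq α (φ n x))) atTop (𝓝 0)) :
    TendstoUniformly φ (fun x => wave α (x - z)) atTop := by
  rw [Metric.tendstoUniformly_iff]
  intro ε hε
  set δ := ε / 3 with hδ
  have hδ0 : 0 < δ := by positivity
  obtain ⟨R, hwR, hR⟩ := (((wave_tendsto_top hα).eventually_const_lt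
    (show AA α - δ < AA α by linarith)).and (eventually_ge_atTop 0)).exists
  have hK : Tendsto (fun n => exp (3 * R) * (2 * ∫ x, bent (deriv (φ n) x) (qq α (φ n x))))
      atTop (𝓝 0) := by
    simpa using (hE.const_mul 2).const_mul (exp (3 * R))
  filter_upwards [hK.eventually_lt_const (show 0 < δ ^ 2 by positivity),
    (Metric.tendsto_nhds.1 haz) δ hδ0] with n hn han x
  have hE0 : 0 ≤ ∫ x, bent (deriv (φ n) x) (qq α (φ n x)) :=
    integral_nonneg ((h n).bent_nonneg hα)
  have h1 := (h n).dist_wave_le hα hδ0.le hR hwR.le (a := a n) (fun t ht => by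
    refine abs_le_of_sq_le_sq ?_ hδ0.le
    refine ((h n).stab hα (hbi n) (ha n) t).trans (le_trans ?_ hn.le)
    gcongr) (x - a n)
  rw [add_sub_cancel, abs_sub_comm, ← Real.dist_eq] at h1
  have h2 := (wave_memC hα).lip.dist_le_mul (x - z) (x - a n)
  rw [dist_sub_left, dist_comm z] at h2
  simp only [NNReal.coe_one, one_mul] at h2
  linarith [dist_triangle (wave α (x - z)) (wave α (x - a n)) (φ n x)]

omit hα in
/-- Along a subsequence, `u_n - sigmoid φ_n` tends to zero almost everywhere. -/
lemma exists_subseq_ae (h : ∀ n, MemC (-AA α) (AA α) (φ n)) (hu : ∀ n, MemU (u n))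
    (hbi : ∀ n, Integrable (fun x => bent (u n x) (Real.sigmoid (φ n x))))
    (hE : Tendsto (fun n => ∫ x, bent (u n x) (Real.sigmoid (φ n x))) atTop (𝓝 0)) :
    ∃ ns : ℕ → ℕ, StrictMono ns ∧
      ∀ᵐ x, Tendsto (fun n => (u (ns n) x - Real.sigmoid (φ (ns n) x)) ^ 2) atTop (𝓝 0) := by
  have hle : ∀ n x, (u n x - Real.sigmoid (φ n x)) ^ 2 ≤
      2 * bent (u n x) (Real.sigmoid (φ n x)) := fun n x => by
    linarith [bent_quad _ _ ((hu n).2 x)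
      ⟨Real.sigmoid_pos (φ n x), Real.sigmoid_lt_one (φ n x)⟩]
  have hm : ∀ n, AEStronglyMeasurable (fun x => (u n x - Real.sigmoid (φ n x)) ^ 2) volume :=
    fun n => (((hu n).1.sub (_root_.continuous_sigmoid.measurable.comp
      (h n).lip.continuous.measurable)).pow_const 2).aestronglyMeasurable
  have hi : ∀ n, Integrable (fun x => (u n x - Real.sigmoid (φ n x)) ^ 2) := fun n => by
    refine ((hbi n).const_mul 2).mono' (hm n) (Eventually.of_forall fun x => ?_)
    rw [Real.norm_of_nonneg (sq_nonneg _)]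
    exact hle n x
  have hI : Tendsto (fun n => ∫ x, (u n x - Real.sigmoid (φ n x)) ^ 2) atTop (𝓝 0) := by
    refine squeeze_zero (fun n => integral_nonneg fun x => sq_nonneg _) (fun n => ?_)
      (by simpa using hE.const_mul 2)
    rw [← integral_const_mul]
    exact integral_mono (hi n) ((hbi n).const_mul 2) (hle n)
  refine (tendstoInMeasure_of_tendsto_eLpNorm (p := 1) (g := fun _ => (0:ℝ)) one_ne_zero hm
    aestronglyMeasurable_const ?_).exists_seq_tendsto_ae
  have h0 := ENNReal.tendsto_ofReal hI
  rw [ENNReal.ofReal_zero] at h0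
  refine h0.congr fun n => ?_
  rw [eLpNorm_one_eq_lintegral_enorm, ← ofReal_integral_norm_eq_lintegral_enorm]
  · congr 1
    refine integral_congr_ae (Eventually.of_forall fun x => ?_)
    simp
  · exact (hi n).sub (integrable_zero _ _ _)

lemma tendsto_weak (hu : ∀ n, MemU (u n))
    (hφ : TendstoUniformly φ (fun x => wave α (x - z)) atTop)
    (hae : ∀ᵐ x, Tendsto (fun n => (u n x - Real.sigmoid (φ n x)) ^ 2) atTop (𝓝 0))
    {f : ℝ → ℝ} (hf : Integrable f) :
    Tendsto (fun n => ∫ x, u n x * f x) atTop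
      (𝓝 (∫ x, ubarStanding ((1 + α) / 2) (x - z) * f x)) := by
  refine tendsto_integral_of_dominated_convergence (fun x => ‖f x‖)
    (fun n => (hu n).1.aestronglyMeasurable.mul hf.1) hf.norm
    (fun n => Eventually.of_forall fun x => ?_) ?_
  · rw [norm_mul, Real.norm_of_nonneg ((hu n).2 x).1]
    exact mul_le_of_le_one_left (norm_nonneg _) ((hu n).2 x).2
  · filter_upwards [hae] with x hx
    refine Tendsto.mul_const _ ?_
    have h1 : Tendsto (fun n => u n x - Real.sigmoid (φ n x)) atTop (𝓝 0) := by
      have := hx.sqrt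
      simp only [Real.sqrt_sq_eq_abs, Real.sqrt_zero] at this
      exact (tendsto_zero_iff_abs_tendsto_zero _).2 this
    have h2 := (_root_.continuous_sigmoid.tendsto _).comp (hφ.tendsto_at x)
    rw [sigmoid_wave hα] at h2
    simpa using h1.add h2

/-- A finite excess energy bound gives the exact boundary values and bounds both entropies. -/
lemma hatGl_unpack {l M : ℝ} {u φ : ℝ → ℝ} (hX : MemX ((1 - α) / 2) ((1 + α) / 2) u φ)
    (hM : hatGl α l u φ ≤ (M : EReal)) :
    MemC (-AA α) (AA α) φ ∧ (∀ x, l ≤ x → φ x = AA α) ∧ (∀ x, x ≤ -l → φ x = -AA α) ∧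
    Integrable (fun x => bent (u x) (Real.sigmoid (φ x))) ∧
    Integrable (fun x => bent (deriv φ x) (qq α (φ x))) ∧
    ∫ x, bent (u x) (Real.sigmoid (φ x)) ≤ M * exp (-α * l) ∧
    ∫ x, bent (deriv φ x) (qq α (φ x)) ≤ M * exp (-α * l) := by
  have h : MemC (-AA α) (AA α) φ := by
    have := hX.2
    rwa [phiOf_plus, phiOf_minus] at this
  have he := exp_pos (α * l)
  unfold hatGl Gl at hM
  split_ifs at hM with hc
  · obtain ⟨hi1, hi2, hex⟩ := h.excess hα hX.1 hc.1 hc.2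
    rw [hex, ← EReal.coe_sub, ← EReal.coe_mul, EReal.coe_le_coe_iff, add_sub_cancel_right] at hM
    have h1 : 0 ≤ ∫ x, bent (u x) (Real.sigmoid (φ x)) := integral_nonneg fun x =>
      le_trans (by positivity) (bent_quad _ _ (hX.1.2 x)
        ⟨Real.sigmoid_pos (φ x), Real.sigmoid_lt_one (φ x)⟩)
    have h2 : 0 ≤ ∫ x, bent (deriv φ x) (qq α (φ x)) := integral_nonneg (h.bent_nonneg hα)
    have h3 : (∫ x, bent (u x) (Real.sigmoid (φ x))) + ∫ x, bent (deriv φ x) (qq α (φ x)) ≤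
        M * exp (-α * l) := by
      rw [neg_mul, Real.exp_neg, ← div_eq_mul_inv, le_div_iff₀ he]
      linarith
    refine ⟨h, fun x hx => ?_, fun x hx => ?_, hi1, hi2, by linarith, by linarith⟩
    · rw [(hc.2 x hx).2, phiOf_plus]
    · rw [(hc.1 x hx).2, phiOf_minus]
  · rw [EReal.top_sub_coe, EReal.mul_top_of_pos (by exact_mod_cast he)] at hM
    exact absurd hM (by simp)

end

/-- Let `α ∈ (0,1)`, `u_± = (1±α)/2`. If `{(u_ℓ,φ_ℓ)} ⊂ X` has
`limsup_{ℓ→∞} Ĝ_ℓ(u_ℓ,φ_ℓ) < ∞`, then up to a subsequence `(u_ℓ,φ_ℓ) → (τ_z ū, τ_z φ̄)`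
in `X` for some `z ∈ ℝ`; in particular `{Ĝ_ℓ}` is equi-coercive. -/
theorem stmt_17 (α : ℝ) (hα : α ∈ Ioo (0:ℝ) 1)
    (U Φ : ℝ → ℝ → ℝ)
    (hmem : ∀ l, MemX ((1-α)/2) ((1+α)/2) (U l) (Φ l))
    (hbd : Filter.limsup (fun l => hatGl α l (U l) (Φ l)) atTop < (⊤ : EReal)) :
    ∃ ln : ℕ → ℝ, StrictMono ln ∧ Tendsto ln atTop atTop ∧ ∃ z : ℝ,
      ConvX (fun n => U (ln n)) (fun n => Φ (ln n))
        (tau z (ubarStanding ((1+α)/2)))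
        (tau z (fun x => phiOf (ubarStanding ((1+α)/2) x))) := by
  obtain ⟨M, hM, -⟩ := EReal.lt_iff_exists_real_btwn.1 hbd
  obtain ⟨l0, hl0⟩ := eventually_atTop.1 (eventually_lt_of_limsup_lt hM)
  have hun := fun n : ℕ => hatGl_unpack hα (hmem (l0 + n)) (hl0 (l0 + n) (by simp)).le
  choose hC hp hm hi1 hi2 hb1 hb2 using hun
  choose a ha using fun n => (hC n).exists_zero hα
  have habs : ∀ n, a n ∈ Icc (-(1 + M / (AA α * α))) (1 + M / (AA α * α)) := fun n =>
    abs_le.1 ((hC n).abs_zero_le hα (hi2 n) (ha n) (hp n) (hm n) (hb2 n))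
  obtain ⟨z, -, ψ, hψ, haz⟩ := isCompact_Icc.tendsto_subseq habs
  have hl : Tendsto (fun n : ℕ => l0 + (n : ℝ)) atTop atTop :=
    tendsto_atTop_add_const_left _ _ tendsto_natCast_atTop_atTop
  have hdecay : Tendsto (fun n : ℕ => M * exp (-α * (l0 + n))) atTop (𝓝 0) := by
    have h1 : Tendsto (fun n : ℕ => -α * (l0 + (n : ℝ))) atTop atBot :=
      hl.const_mul_atTop_of_neg (by linarith [hα.1])
    simpa using (Real.tendsto_exp_atBot.comp h1).const_mul M
  have hE1 : Tendsto (fun n : ℕ => ∫ x, bent (U (l0 + n) x) (Real.sigmoid (Φ (l0 + n) x)))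
      atTop (𝓝 0) := by
    refine squeeze_zero (fun n => integral_nonneg fun x => ?_) hb1 hdecay
    exact le_trans (by positivity) (bent_quad _ _ ((hmem (l0 + n)).1.2 x)
      ⟨Real.sigmoid_pos (Φ (l0 + n) x), Real.sigmoid_lt_one (Φ (l0 + n) x)⟩)
  have hE2 : Tendsto (fun n : ℕ => ∫ x, bent (deriv (Φ (l0 + n)) x) (qq α (Φ (l0 + n) x)))
      atTop (𝓝 0) :=
    squeeze_zero (fun n => integral_nonneg ((hC n).bent_nonneg hα)) hb2 hdecay
  have hunif := tendstoUniformly_wave hα (fun n => hC (ψ n)) (fun n => hi2 (ψ n))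
    (fun n => ha (ψ n)) haz (hE2.comp hψ.tendsto_atTop)
  obtain ⟨ns, hns, hae⟩ := exists_subseq_ae (fun n => hC (ψ n)) (fun n => (hmem (l0 + ψ n)).1)
    (fun n => hi1 (ψ n)) (hE1.comp hψ.tendsto_atTop)
  have hunif' : TendstoUniformly (fun n => Φ (l0 + ψ (ns n))) (fun x => wave α (x - z)) atTop :=
    fun s hs => hns.tendsto_atTop.eventually (hunif s hs)
  refine ⟨fun n => l0 + ψ (ns n), fun m n hmn => ?_,
    hl.comp (hψ.tendsto_atTop.comp hns.tendsto_atTop), z, fun f hf => ?_, hunif'⟩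
  · have : ψ (ns m) < ψ (ns n) := hψ (hns hmn)
    simpa using this
  · exact tendsto_weak hα (fun n => (hmem (l0 + ψ (ns n))).1) hunif' hae hf
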